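/- arXiv:2004.13978 — 2 statements merged into one kernel-verified Lean document; each statement's English description precedes it below -/
import Mathlib

section
/- Let {X_i}_{i∈V} together with I be a feasible SDP solution for the Densest k-Subgraph relaxation, where k is a positive integer, and let S ⊆ V with |S| = k. Then (1/k²) Σ_{i∈S} Σ_{j∈S} ⟨X_i, X_j⟩ ≥ 4·(1/k) Σ_{i∈S} ‖X_i‖² − 3. -/
open RealInnerProductSpace Finset

/-! Cauchy–Schwarz for `∑ i ∈ S, X i` against the unit vector `I` gives `t ^ 2 ≤ μ`, where `t` and
`μ` are the normalized sums of `‖X i‖ ^ 2` and of `⟪X i, X j⟫`. The identity `⟪X i, I⟫ = ‖X i‖ ^ 2`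
also puts every `X i` in the unit ball, so `t ≤ 1`, and then
`t ^ 2 - (4 * t - 3) = (1 - t) * (3 - t)` is nonnegative. -/

section

variable {E : Type*} [SeminormedAddCommGroup E] [InnerProductSpace ℝ E]

theorem norm_le_one_of_inner_eq_norm_sq {x y : E} (hy : ‖y‖ ≤ 1) (hxy : ⟪x, y⟫ = ‖x‖ ^ 2) :
    ‖x‖ ≤ 1 := by
  have h_sq_le : ‖x‖ ^ 2 ≤ ‖x‖ :=
    calc ‖x‖ ^ 2 = ⟪x, y⟫ := hxy.symm
      _ ≤ ‖x‖ * ‖y‖ := real_inner_le_norm x y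
      _ ≤ ‖x‖ := mul_le_of_le_one_right (norm_nonneg x) hy
  nlinarith

variable {ι : Type*} (s : Finset ι) (x : ι → E)

theorem sum_sum_inner_eq_norm_sum_sq :
    ∑ i ∈ s, ∑ j ∈ s, ⟪x i, x j⟫ = ‖∑ i ∈ s, x i‖ ^ 2 := by
  simp_rw [← inner_sum, ← sum_inner, real_inner_self_eq_norm_sq]

theorem sq_sum_inner_le_sum_sum_inner_mul_norm_sq (y : E) :
    (∑ i ∈ s, ⟪x i, y⟫) ^ 2 ≤ (∑ i ∈ s, ∑ j ∈ s, ⟪x i, x j⟫) * ‖y‖ ^ 2 := by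
  rw [← sum_inner, sum_sum_inner_eq_norm_sum_sq, ← mul_pow]
  exact sq_le_sq.2 ((abs_real_inner_le_norm _ y).trans (le_abs_self _))

variable {s x}

theorem sq_sum_norm_sq_le_sum_sum_inner {y : E} (hy : ‖y‖ ≤ 1)
    (hxy : ∀ i ∈ s, ⟪x i, y⟫ = ‖x i‖ ^ 2) :
    (∑ i ∈ s, ‖x i‖ ^ 2) ^ 2 ≤ ∑ i ∈ s, ∑ j ∈ s, ⟪x i, x j⟫ := by
  have h_nonneg : 0 ≤ ∑ i ∈ s, ∑ j ∈ s, ⟪x i, x j⟫ := by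
    rw [sum_sum_inner_eq_norm_sum_sq]
    positivity
  calc (∑ i ∈ s, ‖x i‖ ^ 2) ^ 2 = (∑ i ∈ s, ⟪x i, y⟫) ^ 2 := by rw [sum_congr rfl hxy]
    _ ≤ (∑ i ∈ s, ∑ j ∈ s, ⟪x i, x j⟫) * ‖y‖ ^ 2 :=
      sq_sum_inner_le_sum_sum_inner_mul_norm_sq s x y
    _ ≤ ∑ i ∈ s, ∑ j ∈ s, ⟪x i, x j⟫ :=
      mul_le_of_le_one_right h_nonneg (pow_le_one₀ (norm_nonneg y) hy)

theorem sum_norm_sq_le_card {y : E} (hy : ‖y‖ ≤ 1) (hxy : ∀ i ∈ s, ⟪x i, y⟫ = ‖x i‖ ^ 2) :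
    ∑ i ∈ s, ‖x i‖ ^ 2 ≤ #s := by
  simpa only [nsmul_one] using s.sum_le_card_nsmul (fun i ↦ ‖x i‖ ^ 2) 1 fun i hi ↦
    pow_le_one₀ (norm_nonneg _) (norm_le_one_of_inner_eq_norm_sq hy (hxy i hi))

theorem stmt_1_general {y : E} (hy : ‖y‖ ≤ 1) (hxy : ∀ i ∈ s, ⟪x i, y⟫ = ‖x i‖ ^ 2)
    {k : ℝ} (hk : 0 < k) (hs : #s ≤ k) :
    4 * ((1 / k) * ∑ i ∈ s, ‖x i‖ ^ 2) - 3 ≤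
      (1 / k ^ 2) * ∑ i ∈ s, ∑ j ∈ s, ⟪x i, x j⟫ := by
  set t : ℝ := (1 / k) * ∑ i ∈ s, ‖x i‖ ^ 2 with ht
  have ht_le_one : t ≤ 1 := by
    rw [ht, one_div_mul_eq_div, div_le_one hk]
    exact (sum_norm_sq_le_card hy hxy).trans hs
  have h_factors_nonneg : 0 ≤ (1 - t) * (3 - t) :=
    mul_nonneg (by linarith) (by linarith)
  calc 4 * t - 3 ≤ t ^ 2 := by linarith
    _ = (1 / k ^ 2) * (∑ i ∈ s, ‖x i‖ ^ 2) ^ 2 := by rw [ht, mul_pow, one_div_pow]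
    _ ≤ (1 / k ^ 2) * ∑ i ∈ s, ∑ j ∈ s, ⟪x i, x j⟫ := by
      gcongr
      exact sq_sum_norm_sq_le_sum_sum_inner hy hxy

end

theorem stmt_1 {n m : ℕ} (hn : 1 ≤ n) (k : ℕ) (hk : 0 < k)
    (X : Fin n → EuclideanSpace ℝ (Fin m)) (I : EuclideanSpace ℝ (Fin m))
    (hsum : ∑ i, ‖X i‖ ^ 2 = (k : ℝ))
    (hrow : ∀ i, ∑ j, ⟪X i, X j⟫ ≤ (k : ℝ) * ‖X i‖ ^ 2)
    (hnn : ∀ i j, 0 ≤ ⟪X i, X j⟫)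
    (hle1 : ∀ i j, ⟪X i, X j⟫ ≤ ‖X i‖ ^ 2)
    (hle2 : ∀ i j, ⟪X i, X j⟫ ≤ ‖X j‖ ^ 2)
    (hnorm1 : ∀ i, ‖X i‖ ^ 2 ≤ 1)
    (hXI : ∀ i, ⟪X i, I⟫ = ‖X i‖ ^ 2)
    (hInorm : ‖I‖ = 1)
    (S : Finset (Fin n)) (hS : S.card = k) :
    4 * ((1 / (k : ℝ)) * ∑ i ∈ S, ‖X i‖ ^ 2) - 3 ≤
      (1 / (k : ℝ) ^ 2) * ∑ i ∈ S, ∑ j ∈ S, ⟪X i, X j⟫ :=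
  stmt_1_general hInorm.le (fun i _ ↦ hXI i) (Nat.cast_pos.2 hk) (Nat.cast_le.2 hS.le)
end

section
/- Let {X_i}_{i∈V} together with I be a feasible SDP solution for the Densest k-Subgraph relaxation, where k is a positive integer, and let S ⊆ V with |S| = k. Let p ≥ 0 and β ≥ 0, and let B be the symmetric n×n matrix with B_{ij} = A_{ij} − p whenever exactly one of i, j lies in S, and B_{ij} = 0 otherwise. If the spectral norm of B satisfies ‖B‖ ≤ β, then, setting μ := (1/k) Σ_{i∈S} ‖X_i‖², one has Σ_{i∈S} Σ_{j∈V∖S} A_{ij} ⟨X_i, X_j⟩ ≤ 3pk²(1 − μ) + kβ·√(μ(1 − μ)). -/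
open RealInnerProductSpace Finset

/-!
With `T = V ∖ S`, compare `A` with `p + B` on the block `S × T`. Since `⟪X i, X j⟫ ≤ ‖X j‖²`, the
constant part contributes at most `p |S| ∑_{j ∈ T} ‖X j‖²`. A matrix acting on tuples of vectors of
an inner product space has no larger norm than on tuples of scalars, as one sees in orthonormal
coordinates, so by Cauchy–Schwarz `B` contributes at most `β` times the geometric mean of the masses
`k μ` of `S` and `k (1 - μ)` of `T`.
-/

section L2Operator

open scoped Matrix.Norms.L2Operator

variable {𝕜 E m n : Type*} [RCLike 𝕜] [NormedAddCommGroup E] [InnerProductSpace 𝕜 E]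
  [Fintype m] [Fintype n] [DecidableEq n]

theorem sum_norm_mulVec_sq_le (B : Matrix m n 𝕜) (v : n → 𝕜) :
    ∑ i, ‖B.mulVec v i‖ ^ 2 ≤ ‖B‖ ^ 2 * ∑ j, ‖v j‖ ^ 2 := by
  have h := pow_le_pow_left₀ (norm_nonneg _) (B.l2_opNorm_mulVec (WithLp.toLp 2 v)) 2
  simpa only [mul_pow, EuclideanSpace.norm_sq_eq] using! h

theorem sum_norm_sum_smul_sq_le_of_finiteDimensional [FiniteDimensional 𝕜 E]
    (B : Matrix m n 𝕜) (y : n → E) :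
    ∑ i, ‖∑ j, B i j • y j‖ ^ 2 ≤ ‖B‖ ^ 2 * ∑ j, ‖y j‖ ^ 2 := by
  let b := stdOrthonormalBasis 𝕜 E
  have hcoord (c) (i) : inner 𝕜 (b c) (∑ j, B i j • y j) =
      B.mulVec (fun j ↦ inner 𝕜 (b c) (y j)) i := by
    simp only [inner_sum, inner_smul_right, Matrix.mulVec, dotProduct]
  calc ∑ i, ‖∑ j, B i j • y j‖ ^ 2
      = ∑ c, ∑ i, ‖B.mulVec (fun j ↦ inner 𝕜 (b c) (y j)) i‖ ^ 2 := by
        simp only [← b.sum_sq_norm_inner_right, hcoord]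
        exact sum_comm
    _ ≤ ∑ c, ‖B‖ ^ 2 * ∑ j, ‖inner 𝕜 (b c) (y j)‖ ^ 2 :=
        sum_le_sum fun c _ ↦ sum_norm_mulVec_sq_le B _
    _ = ‖B‖ ^ 2 * ∑ j, ‖y j‖ ^ 2 := by
        rw [← mul_sum, sum_comm]
        simp only [b.sum_sq_norm_inner_right]

theorem sum_norm_sum_smul_sq_le (B : Matrix m n 𝕜) (y : n → E) :
    ∑ i, ‖∑ j, B i j • y j‖ ^ 2 ≤ ‖B‖ ^ 2 * ∑ j, ‖y j‖ ^ 2 := by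
  let K := Submodule.span 𝕜 (Set.range y)
  have : FiniteDimensional 𝕜 K := FiniteDimensional.span_of_finite 𝕜 (Set.finite_range y)
  let z (j : n) : K := ⟨y j, Submodule.subset_span (Set.mem_range_self j)⟩
  simpa [z, ← Submodule.norm_coe] using sum_norm_sum_smul_sq_le_of_finiteDimensional B z

theorem norm_sum_sum_mul_inner_le (B : Matrix m n 𝕜) (x : m → E) (y : n → E)
    (s : Finset m) (t : Finset n) :
    ‖∑ i ∈ s, ∑ j ∈ t, B i j * inner 𝕜 (x i) (y j)‖ ≤
      ‖B‖ * (√(∑ i ∈ s, ‖x i‖ ^ 2) * √(∑ j ∈ t, ‖y j‖ ^ 2)) := by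
  have hB : ∑ i ∈ s, ‖∑ j ∈ t, B i j • y j‖ ^ 2 ≤ ‖B‖ ^ 2 * ∑ j ∈ t, ‖y j‖ ^ 2 :=
    calc ∑ i ∈ s, ‖∑ j ∈ t, B i j • y j‖ ^ 2
        ≤ ∑ i, ‖∑ j ∈ t, B i j • y j‖ ^ 2 := sum_le_univ_sum_of_nonneg fun _ ↦ sq_nonneg _
      _ ≤ ‖B‖ ^ 2 * ∑ j ∈ t, ‖y j‖ ^ 2 := by
        simpa [apply_ite] using sum_norm_sum_smul_sq_le B fun j ↦ if j ∈ t then y j else 0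
  calc ‖∑ i ∈ s, ∑ j ∈ t, B i j * inner 𝕜 (x i) (y j)‖
      = ‖∑ i ∈ s, inner 𝕜 (x i) (∑ j ∈ t, B i j • y j)‖ := by
        simp only [inner_sum, inner_smul_right]
    _ ≤ ∑ i ∈ s, ‖x i‖ * ‖∑ j ∈ t, B i j • y j‖ :=
        norm_sum_le_of_le _ fun _ _ ↦ norm_inner_le_norm _ _
    _ ≤ √(∑ i ∈ s, ‖x i‖ ^ 2) * √(∑ i ∈ s, ‖∑ j ∈ t, B i j • y j‖ ^ 2) :=
        Real.sum_mul_le_sqrt_mul_sqrt _ _ _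
    _ ≤ √(∑ i ∈ s, ‖x i‖ ^ 2) * √(‖B‖ ^ 2 * ∑ j ∈ t, ‖y j‖ ^ 2) := by gcongr
    _ = ‖B‖ * (√(∑ i ∈ s, ‖x i‖ ^ 2) * √(∑ j ∈ t, ‖y j‖ ^ 2)) := by
        rw [Real.sqrt_mul (sq_nonneg _), Real.sqrt_sq (norm_nonneg _), mul_left_comm]

theorem sum_sum_mul_inner_le_of_le_const_add [InnerProductSpace ℝ E] {A B : Matrix m n ℝ}
    {x : m → E} {y : n → E} {s : Finset m} {t : Finset n} {p : ℝ} (hp : 0 ≤ p)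
    (hnn : ∀ i ∈ s, ∀ j ∈ t, 0 ≤ ⟪x i, y j⟫)
    (hle : ∀ i ∈ s, ∀ j ∈ t, ⟪x i, y j⟫ ≤ ‖y j‖ ^ 2)
    (hAB : ∀ i ∈ s, ∀ j ∈ t, A i j ≤ p + B i j) :
    ∑ i ∈ s, ∑ j ∈ t, A i j * ⟪x i, y j⟫ ≤
      p * (#s * ∑ j ∈ t, ‖y j‖ ^ 2) +
        ‖B‖ * (√(∑ i ∈ s, ‖x i‖ ^ 2) * √(∑ j ∈ t, ‖y j‖ ^ 2)) := by
  have hconst : ∑ i ∈ s, ∑ j ∈ t, ⟪x i, y j⟫ ≤ #s * ∑ j ∈ t, ‖y j‖ ^ 2 := by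
    rw [← nsmul_eq_mul]
    exact sum_le_card_nsmul _ _ _ fun i hi ↦ sum_le_sum (hle i hi)
  have hspectral : ∑ i ∈ s, ∑ j ∈ t, B i j * ⟪x i, y j⟫ ≤
      ‖B‖ * (√(∑ i ∈ s, ‖x i‖ ^ 2) * √(∑ j ∈ t, ‖y j‖ ^ 2)) :=
    (le_abs_self _).trans (norm_sum_sum_mul_inner_le B x y s t)
  calc ∑ i ∈ s, ∑ j ∈ t, A i j * ⟪x i, y j⟫
      ≤ ∑ i ∈ s, ∑ j ∈ t, (p + B i j) * ⟪x i, y j⟫ :=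
        sum_le_sum fun i hi ↦ sum_le_sum fun j hj ↦
          mul_le_mul_of_nonneg_right (hAB i hi j hj) (hnn i hi j hj)
    _ = p * ∑ i ∈ s, ∑ j ∈ t, ⟪x i, y j⟫ + ∑ i ∈ s, ∑ j ∈ t, B i j * ⟪x i, y j⟫ := by
        simp only [add_mul, sum_add_distrib, mul_sum]
    _ ≤ p * (#s * ∑ j ∈ t, ‖y j‖ ^ 2) +
        ‖B‖ * (√(∑ i ∈ s, ‖x i‖ ^ 2) * √(∑ j ∈ t, ‖y j‖ ^ 2)) := by gcongr

end L2Operator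

theorem stmt_4_general {ι E : Type*} [Fintype ι] [DecidableEq ι] [NormedAddCommGroup E]
    [InnerProductSpace ℝ E] {A B : Matrix ι ι ℝ} {X : ι → E} {S : Finset ι} {k p β μ : ℝ}
    (hsum : ∑ i, ‖X i‖ ^ 2 = k) (hμ : ∑ i ∈ S, ‖X i‖ ^ 2 = k * μ) (hS : #S ≤ k) (hp : 0 ≤ p)
    (hnn : ∀ i ∈ S, ∀ j ∈ Sᶜ, 0 ≤ ⟪X i, X j⟫)
    (hle : ∀ i ∈ S, ∀ j ∈ Sᶜ, ⟪X i, X j⟫ ≤ ‖X j‖ ^ 2)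
    (hAB : ∀ i ∈ S, ∀ j ∈ Sᶜ, A i j ≤ p + B i j)
    (hBnorm : ‖Matrix.toEuclideanCLM (𝕜 := ℝ) B‖ ≤ β) :
    ∑ i ∈ S, ∑ j ∈ Sᶜ, A i j * ⟪X i, X j⟫ ≤
      p * k ^ 2 * (1 - μ) + k * β * √(μ * (1 - μ)) := by
  have hcompl : ∑ i ∈ Sᶜ, ‖X i‖ ^ 2 = k * (1 - μ) := by
    linarith [sum_add_sum_compl S fun i ↦ ‖X i‖ ^ 2]
  have hk : 0 ≤ k := (Nat.cast_nonneg _).trans hS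
  have hS_nonneg : 0 ≤ k * μ := hμ ▸ sum_nonneg fun _ _ ↦ sq_nonneg _
  have hcompl_nonneg : 0 ≤ k * (1 - μ) := hcompl ▸ sum_nonneg fun _ _ ↦ sq_nonneg _
  have hsqrt : √(k * μ) * √(k * (1 - μ)) = k * √(μ * (1 - μ)) := by
    rw [← Real.sqrt_mul hS_nonneg, mul_mul_mul_comm, Real.sqrt_mul (mul_self_nonneg k),
      Real.sqrt_mul_self hk]
  have h := sum_sum_mul_inner_le_of_le_const_add hp hnn hle hAB
  rw [hμ, hcompl, hsqrt, ← Matrix.l2_opNorm_toEuclideanCLM] at h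
  calc ∑ i ∈ S, ∑ j ∈ Sᶜ, A i j * ⟪X i, X j⟫
      ≤ p * (#S * (k * (1 - μ))) +
          ‖Matrix.toEuclideanCLM (𝕜 := ℝ) B‖ * (k * √(μ * (1 - μ))) := h
    _ ≤ p * (k * (k * (1 - μ))) + β * (k * √(μ * (1 - μ))) := by gcongr
    _ = p * k ^ 2 * (1 - μ) + k * β * √(μ * (1 - μ)) := by ring

theorem stmt_4 {n m : ℕ} (hn : 1 ≤ n) (k : ℕ) (hk : 0 < k)
    (A : Matrix (Fin n) (Fin n) ℝ) (hAsymm : A.IsSymm) (hAnn : ∀ i j, 0 ≤ A i j)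
    (X : Fin n → EuclideanSpace ℝ (Fin m)) (I : EuclideanSpace ℝ (Fin m))
    (hsum : ∑ i, ‖X i‖ ^ 2 = (k : ℝ))
    (hrow : ∀ i, ∑ j, ⟪X i, X j⟫ ≤ (k : ℝ) * ‖X i‖ ^ 2)
    (hnn : ∀ i j, 0 ≤ ⟪X i, X j⟫)
    (hle1 : ∀ i j, ⟪X i, X j⟫ ≤ ‖X i‖ ^ 2)
    (hle2 : ∀ i j, ⟪X i, X j⟫ ≤ ‖X j‖ ^ 2)
    (hnorm1 : ∀ i, ‖X i‖ ^ 2 ≤ 1)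
    (hXI : ∀ i, ⟪X i, I⟫ = ‖X i‖ ^ 2)
    (hInorm : ‖I‖ = 1)
    (S : Finset (Fin n)) (hS : S.card = k)
    (p β : ℝ) (hp : 0 ≤ p) (hβ : 0 ≤ β)
    (B : Matrix (Fin n) (Fin n) ℝ)
    (hB : ∀ i j, B i j = if ((i ∈ S) ↔ (j ∈ S)) then 0 else A i j - p)
    (hBnorm : ‖Matrix.toEuclideanCLM (𝕜 := ℝ) B‖ ≤ β) :
    ∑ i ∈ S, ∑ j ∈ Sᶜ, A i j * ⟪X i, X j⟫ ≤
      3 * p * (k : ℝ) ^ 2 * (1 - (1 / (k : ℝ)) * ∑ i ∈ S, ‖X i‖ ^ 2) +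
        (k : ℝ) * β * Real.sqrt (((1 / (k : ℝ)) * ∑ i ∈ S, ‖X i‖ ^ 2) *
          (1 - (1 / (k : ℝ)) * ∑ i ∈ S, ‖X i‖ ^ 2)) := by
  have hk_ne : (k : ℝ) ≠ 0 := Nat.cast_ne_zero.mpr hk.ne'
  -- The factor `3` is slack: `A ≤ p + B` already holds on the block.
  have hAB (i) (hi : i ∈ S) (j) (hj : j ∈ Sᶜ) : A i j ≤ 3 * p + B i j := by
    have hBij : B i j = A i j - p := by simp [hB, hi, mem_compl.mp hj]
    linarith
  exact stmt_4_general hsum (by field_simp) (by rw [hS]) (by positivity)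
    (fun i _ j _ ↦ hnn i j) (fun i _ j _ ↦ hle2 i j) hAB hBnorm
end
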